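/- Assume f ∈ L^∞(Ω), u ∈ H²(Ω), and that r = f + a' u' − b u' − c u is not identically zero. There exist a constant γ > 0 depending only on Ω, a, b and c, and a positive integer N₀ independent of the finite element approximation and of the mesh, such that, with ρ₀ = (1 + γ (‖r‖_{L^∞(Ω)} / ‖r‖_{L^{2/3}(Ω)})^{2/3})², for every N ≥ N₀ and every mesh X ∈ S_N the quantities computed from the corresponding finite element solution satisfy: (1/2) ‖r‖_{L^{2/3}(Ω)}^{2/3} ≤ α_h^{1/3} ≤ (3/2) ‖r‖_{L^{2/3}(Ω)}^{2/3}, 1 ≤ ρ_i ≤ ρ₀ for all i, and 1 ≤ σ_h ≤ 2. -/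

import Mathlib

/-!
Setting of Huang–He, "Error analysis for equidistributing meshes":
the boundary value problem  −(a u')' + b u' + c u = f on Ω = (0,1), u(0)=u(1)=0,
its linear finite element discretization on a mesh 0 = x₀ < ⋯ < x_N = 1,
and the residual-based equidistribution quantities.
-/

noncomputable section
open MeasureTheory Real

namespace EquidMesh

/-- L² norm on (0,1). -/
def L2 (g : ℝ → ℝ) : ℝ := Real.sqrt (∫ t in (0:ℝ)..1, (g t)^2)

/-- L¹ norm on (0,1). -/
def L1 (g : ℝ → ℝ) : ℝ := ∫ t in (0:ℝ)..1, |g t|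

/-- The L^{2/3} quasi-norm on (0,1): (∫₀¹ |g|^{2/3})^{3/2}. -/
def Lp23 (g : ℝ → ℝ) : ℝ := (∫ t in (0:ℝ)..1, |g t| ^ ((2:ℝ)/3)) ^ ((3:ℝ)/2)

/-- L^∞ norm (essential supremum of |g|) on (0,1). -/
def Linf (g : ℝ → ℝ) : ℝ := essSup (fun t => |g t|) (volume.restrict (Set.Ioo (0:ℝ) 1))

/-- Membership in L²(0,1). -/
def MemL2 (g : ℝ → ℝ) : Prop :=
  Measurable g ∧ IntervalIntegrable (fun t => (g t)^2) volume 0 1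

/-- Membership in L^∞(0,1). -/
def MemLinf (g : ℝ → ℝ) : Prop :=
  Measurable g ∧ ∃ M : ℝ, ∀ᵐ x ∂(volume.restrict (Set.Ioo (0:ℝ) 1)), |g x| ≤ M

/-- `g` is absolutely continuous on [0,1] with derivative `g' ∈ L¹(0,1)`. -/
def HasL1Deriv (g g' : ℝ → ℝ) : Prop :=
  Measurable g' ∧ IntervalIntegrable g' volume 0 1 ∧
    ∀ x ∈ Set.Icc (0:ℝ) 1, g x = g 0 + ∫ t in (0:ℝ)..x, g' t

/-- A function in H¹(0,1): absolutely continuous on [0,1], carried together with its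
(a.e.) derivative, which lies in L²(0,1). -/
structure H1 where
  val : ℝ → ℝ
  dval : ℝ → ℝ
  dval_meas : Measurable dval
  dval_int : IntervalIntegrable dval volume 0 1
  dval_sq_int : IntervalIntegrable (fun t => (dval t)^2) volume 0 1
  ftc : ∀ x ∈ Set.Icc (0:ℝ) 1, val x = val 0 + ∫ t in (0:ℝ)..x, dval t

/-- `u ∈ H²(0,1)`: the derivative `u'` is absolutely continuous with `u'' ∈ L²(0,1)`. -/
def H1.IsH2 (u : H1) : Prop :=
  ∃ u'' : ℝ → ℝ, Measurable u'' ∧ IntervalIntegrable u'' volume 0 1 ∧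
    IntervalIntegrable (fun t => (u'' t)^2) volume 0 1 ∧
    ∀ x ∈ Set.Icc (0:ℝ) 1, u.dval x = u.dval 0 + ∫ t in (0:ℝ)..x, u'' t

/-- The coefficients of the elliptic problem on Ω = (0,1):
`a, b ∈ W^{1,∞}(Ω)`, `c ∈ L^∞(Ω)`, `a ≥ a₀ > 0`, and `c − b'/2 ≥ 0` a.e. -/
structure Coeffs where
  a : ℝ → ℝ
  b : ℝ → ℝ
  c : ℝ → ℝ
  a' : ℝ → ℝ
  b' : ℝ → ℝ
  a0 : ℝ
  a0_pos : 0 < a0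
  a_lb : ∀ x ∈ Set.Icc (0:ℝ) 1, a0 ≤ a x
  a'_meas : Measurable a'
  b'_meas : Measurable b'
  c_meas : Measurable c
  a'_int : IntervalIntegrable a' volume 0 1
  b'_int : IntervalIntegrable b' volume 0 1
  a'_bdd : ∃ M : ℝ, ∀ᵐ x ∂(volume.restrict (Set.Ioo (0:ℝ) 1)), |a' x| ≤ M
  b'_bdd : ∃ M : ℝ, ∀ᵐ x ∂(volume.restrict (Set.Ioo (0:ℝ) 1)), |b' x| ≤ M
  c_bdd : ∃ M : ℝ, ∀ᵐ x ∂(volume.restrict (Set.Ioo (0:ℝ) 1)), |c x| ≤ M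
  ftc_a : ∀ x ∈ Set.Icc (0:ℝ) 1, a x = a 0 + ∫ t in (0:ℝ)..x, a' t
  ftc_b : ∀ x ∈ Set.Icc (0:ℝ) 1, b x = b 0 + ∫ t in (0:ℝ)..x, b' t
  cb_nonneg : ∀ᵐ x ∂(volume.restrict (Set.Ioo (0:ℝ) 1)), 0 ≤ c x - b' x / 2

/-- The bilinear form B(u,v) = ∫₀¹ (a u' v' + b u' v + c u v) dx. -/
def Coeffs.B (P : Coeffs) (u v : H1) : ℝ :=
  ∫ t in (0:ℝ)..1,
    (P.a t * u.dval t * v.dval t + P.b t * u.dval t * v.val t + P.c t * u.val t * v.val t)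

/-- The right-hand side functional (f, v) = ∫₀¹ f v dx. -/
def ip (f : ℝ → ℝ) (v : H1) : ℝ := ∫ t in (0:ℝ)..1, f t * v.val t

/-- `u ∈ H¹₀(Ω)` is the weak solution: B(u,v) = (f,v) for all v ∈ H¹₀(Ω). -/
def Coeffs.IsWeakSolution (P : Coeffs) (f : ℝ → ℝ) (u : H1) : Prop :=
  u.val 0 = 0 ∧ u.val 1 = 0 ∧
    ∀ v : H1, v.val 0 = 0 → v.val 1 = 0 → P.B u v = ip f v

/-- A mesh of N elements of Ω = (0,1): 0 = x₀ < x₁ < ⋯ < x_N = 1. -/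
structure Mesh (N : ℕ) where
  x : ℕ → ℝ
  x_zero : x 0 = 0
  x_last : x N = 1
  x_mono : ∀ i < N, x i < x (i+1)

/-- Element length (the element of index `i` is `(x i, x (i+1))`, `0 ≤ i < N`). -/
def Mesh.h {N : ℕ} (m : Mesh N) (i : ℕ) : ℝ := m.x (i+1) - m.x i

/-- `v` is piecewise linear with respect to the mesh: its derivative is constant
inside each element. -/
def Mesh.IsPL {N : ℕ} (m : Mesh N) (v : H1) : Prop :=
  ∀ i < N, ∃ s : ℝ, ∀ t ∈ Set.Ioo (m.x i) (m.x (i+1)), v.dval t = s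

/-- `uh` is the linear finite element solution on the mesh `m`:
a continuous piecewise linear function vanishing at 0 and 1 with
B(u_h, v_h) = (f, v_h) for all piecewise linear v_h vanishing at 0 and 1. -/
def Coeffs.IsFESolution (P : Coeffs) (f : ℝ → ℝ) {N : ℕ} (m : Mesh N) (uh : H1) : Prop :=
  uh.val 0 = 0 ∧ uh.val 1 = 0 ∧ m.IsPL uh ∧
    ∀ v : H1, v.val 0 = 0 → v.val 1 = 0 → m.IsPL v → P.B uh v = ip f v

/-- The residual of `w`: r = f + a' w' − b w' − c w. -/
def Coeffs.res (P : Coeffs) (f : ℝ → ℝ) (w : H1) : ℝ → ℝ :=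
  fun t => f t + P.a' t * w.dval t - P.b t * w.dval t - P.c t * w.val t

/-- The element L² average ⟨g⟩_i = (h_i⁻¹ ∫_{K_i} g²)^{1/2}. -/
def Mesh.avg {N : ℕ} (m : Mesh N) (g : ℝ → ℝ) (i : ℕ) : ℝ :=
  Real.sqrt ((1 / m.h i) * ∫ t in (m.x i)..(m.x (i+1)), (g t)^2)

/-- The intensity parameter α_h = (Σ_i h_i ⟨g⟩_i^{2/3})³. -/
def Mesh.alpha {N : ℕ} (m : Mesh N) (g : ℝ → ℝ) : ℝ :=
  (∑ i ∈ Finset.range N, m.h i * (m.avg g i) ^ ((2:ℝ)/3)) ^ 3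

/-- The adaptation function value ρ_i = (1 + α_h⁻¹ ⟨g⟩_i²)^{1/3}. -/
def Mesh.rho {N : ℕ} (m : Mesh N) (g : ℝ → ℝ) (i : ℕ) : ℝ :=
  (1 + (m.alpha g)⁻¹ * (m.avg g i)^2) ^ ((1:ℝ)/3)

/-- σ_h = Σ_i ρ_i h_i. -/
def Mesh.sigma {N : ℕ} (m : Mesh N) (g : ℝ → ℝ) : ℝ :=
  ∑ i ∈ Finset.range N, m.rho g i * m.h i

/-- The mesh equidistributes (the piecewise constant adaptation function built from) `g`:
ρ_i h_i = σ_h / N for all elements. -/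
def Mesh.IsEquidistributing {N : ℕ} (m : Mesh N) (g : ℝ → ℝ) : Prop :=
  ∀ i < N, m.rho g i * m.h i = m.sigma g / (N:ℝ)

/-- Membership in the mesh set S_N: 1/(ρ₀ N) ≤ h_i ≤ 2/N for all i. -/
def Mesh.InS {N : ℕ} (m : Mesh N) (ρ0 : ℝ) : Prop :=
  ∀ i < N, 1 / (ρ0 * (N:ℝ)) ≤ m.h i ∧ m.h i ≤ 2 / (N:ℝ)

/-- The maximum norm distance ‖X − X̃‖_∞ between two meshes with the same N. -/
def meshDist {N : ℕ} (m m' : Mesh N) : ℝ :=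
  (Finset.range (N+1)).sup' (Finset.nonempty_range_iff.mpr (Nat.succ_ne_zero N))
    (fun i => |m.x i - m'.x i|)

/-- The energy norm squared ‖v‖_E² = ∫₀¹ (a v'² + (c − b'/2) v²) dx. -/
def Coeffs.energySq (P : Coeffs) (v : H1) : ℝ :=
  ∫ t in (0:ℝ)..1, (P.a t * (v.dval t)^2 + (P.c t - P.b' t / 2) * (v.val t)^2)

/-!
Céa's lemma and piecewise linear interpolation give `‖u_h' − u'‖ = O(1/N)`, and since
`r_h − r = (a' − b)(u_h' − u') − c (u_h − u)`, also `‖r_h − r‖ = O(1/N)`. Restricting to an element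
costs a factor `h_i^{-1/2}`, which is only `O(N^{1/2})` on the meshes of `S_N`, so the averages
`⟨r_h − r⟩_i` tend to `0` uniformly in `i`.

By Jensen's inequality `Σ h_i ⟨g⟩_i^{2/3}` lies between `∫ |g|^{2/3}` and `‖g‖^{2/3}`. It is
subadditive in `g`, because `y ↦ y^{2/3}` is, and it converges to `∫ |g|^{2/3}` for continuous `g`,
hence by density for every `g ∈ L²`. Applied to `r`, and compared with `r_h`, this gives
`α_h^{1/3} → ∫ |r|^{2/3}`. The bounds on `ρ_i` and `σ_h` then follow from
`ρ_i ≤ 1 + ⟨r_h⟩_i^{2/3} / α_h^{1/3}`, whose mean over the elements is at most `2`.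
-/

section MeasureSpace

variable {α : Type*} [MeasurableSpace α] {μ : Measure α} {f g k : α → ℝ}

lemma lpNorm_two_eq_sqrt_integral_sq (hf : AEStronglyMeasurable f μ) :
    lpNorm f 2 μ = √(∫ t, f t ^ 2 ∂μ) := by
  rw [lpNorm_eq_integral_norm_rpow_toReal (by norm_num) (by norm_num) hf, Real.sqrt_eq_rpow]
  norm_num

lemma sq_lpNorm_two (hf : AEStronglyMeasurable f μ) : lpNorm f 2 μ ^ 2 = ∫ t, f t ^ 2 ∂μ := by
  rw [lpNorm_two_eq_sqrt_integral_sq hf, Real.sq_sqrt (integral_nonneg fun _ => sq_nonneg _)]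

lemma lpNorm_mul_le_of_ae_bound {M : ℝ} (hk : ∀ᵐ t ∂μ, |k t| ≤ M) (hM : 0 ≤ M) {p : ENNReal}
    (hf : MemLp f p μ) : lpNorm (k * f) p μ ≤ M * lpNorm f p μ := by
  by_cases hkf : AEStronglyMeasurable (k * f) μ
  · have hle : eLpNorm (k * f) p μ ≤ ENNReal.ofReal M * eLpNorm f p μ :=
      eLpNorm_le_mul_eLpNorm_of_ae_le_mul (hk.mono fun t ht => by
        rw [Pi.mul_apply, norm_mul]
        exact mul_le_mul_of_nonneg_right ht (norm_nonneg _)) p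
    simpa only [ENNReal.toReal_mul, ENNReal.toReal_ofReal hM, toReal_eLpNorm hkf,
      toReal_eLpNorm hf.1] using
      ENNReal.toReal_mono (ENNReal.mul_ne_top ENNReal.ofReal_ne_top hf.2.ne) hle
  · rw [lpNorm_of_not_aestronglyMeasurable hkf]
    exact mul_nonneg hM lpNorm_nonneg

lemma abs_integral_mul_le (hf : MemLp f 2 μ) (hg : MemLp g 2 μ) :
    |∫ t, f t * g t ∂μ| ≤ lpNorm f 2 μ * lpNorm g 2 μ := by
  have holder := integral_mul_norm_le_Lp_mul_Lq (μ := μ) Real.HolderConjugate.two_two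
    (f := f) (g := g) (by simpa using hf) (by simpa using hg)
  rw [lpNorm_two_eq_sqrt_integral_sq hf.1, lpNorm_two_eq_sqrt_integral_sq hg.1,
    Real.sqrt_eq_rpow, Real.sqrt_eq_rpow]
  refine (abs_integral_le_integral_abs).trans ?_
  simpa [abs_mul] using holder

lemma abs_integral_mul_mul_le (hk : MemLp k ⊤ μ) {M : ℝ} (hkM : ∀ᵐ t ∂μ, |k t| ≤ M) (hM : 0 ≤ M)
    (hf : MemLp f 2 μ) (hg : MemLp g 2 μ) :
    |∫ t, k t * f t * g t ∂μ| ≤ M * lpNorm f 2 μ * lpNorm g 2 μ :=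
  (abs_integral_mul_le (hf.mul hk) hg).trans
    (mul_le_mul_of_nonneg_right (lpNorm_mul_le_of_ae_bound hkM hM hf) lpNorm_nonneg)

section Probability

variable [IsProbabilityMeasure μ] {p : ENNReal}

lemma lpNorm_le_of_ae_bound {L : ℝ} (hL : 0 ≤ L) (hg : ∀ᵐ t ∂μ, |g t| ≤ L) :
    lpNorm g p μ ≤ L := by
  by_cases h : AEStronglyMeasurable g μ
  · rw [← toReal_eLpNorm h]
    refine ENNReal.toReal_le_of_le_ofReal hL ?_
    simpa using eLpNorm_le_of_ae_bound (μ := μ) (f := g) (p := p) hg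
  · rwa [lpNorm_of_not_aestronglyMeasurable h]

lemma integrable_abs_rpow {q : ℝ} (hq : 0 < q) (hqp : ENNReal.ofReal q ≤ p)
    (hg : MemLp g p μ) : Integrable (fun t => |g t| ^ q) μ := by
  simpa [ENNReal.toReal_ofReal hq.le] using (hg.mono_exponent hqp).integrable_norm_rpow'

lemma integral_abs_rpow_le_lpNorm_rpow {q : ℝ} (hq : 0 < q) (hqp : ENNReal.ofReal q ≤ p)
    (hg : MemLp g p μ) : ∫ t, |g t| ^ q ∂μ ≤ lpNorm g p μ ^ q := by
  have hmono : lpNorm g (ENNReal.ofReal q) μ ≤ lpNorm g p μ := by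
    rw [← toReal_eLpNorm hg.1, ← toReal_eLpNorm hg.1]
    exact ENNReal.toReal_mono hg.2.ne (eLpNorm_le_eLpNorm_of_exponent_le hqp hg.1)
  have hint : 0 ≤ ∫ t, |g t| ^ q ∂μ := integral_nonneg fun t => Real.rpow_nonneg (abs_nonneg _) q
  rw [lpNorm_eq_integral_norm_rpow_toReal (by simpa using hq) ENNReal.ofReal_ne_top hg.1,
    ENNReal.toReal_ofReal hq.le] at hmono
  exact (Real.rpow_inv_le_iff_of_pos hint lpNorm_nonneg hq).1 hmono

lemma integral_abs_le_lpNorm (hp : 1 ≤ p) (hg : MemLp g p μ) :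
    ∫ t, |g t| ∂μ ≤ lpNorm g p μ := by
  simpa using integral_abs_rpow_le_lpNorm_rpow one_pos (by simpa using hp) hg

lemma abs_sub_integral_le {c ω : ℝ} (hg : Integrable g μ) (hω : ∀ᵐ t ∂μ, |c - g t| ≤ ω) :
    |c - ∫ t, g t ∂μ| ≤ ω := by
  have hc : c - ∫ t, g t ∂μ = ∫ t, (c - g t) ∂μ := by
    rw [integral_sub (integrable_const c) hg, integral_const, probReal_univ, one_smul]
  rw [hc]
  simpa using norm_integral_le_of_norm_le_const (f := fun t => c - g t) hω

end Probability

end MeasureSpace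

/-- Lebesgue measure on the unit interval. The interval is half-open so that `∫ t in 0..1` is an
integral against it. -/
abbrev unitVol : Measure ℝ := volume.restrict (Set.Ioc 0 1)

section UnitInterval

variable {g : ℝ → ℝ}

instance : IsProbabilityMeasure unitVol := ⟨by simp⟩

lemma restrict_Ioo_eq_unitVol : volume.restrict (Set.Ioo (0 : ℝ) 1) = unitVol :=
  Measure.restrict_congr_set Ioo_ae_eq_Ioc

lemma integral_zero_one_eq_integral_unitVol (g : ℝ → ℝ) :
    ∫ t in (0 : ℝ)..1, g t = ∫ t, g t ∂unitVol :=
  intervalIntegral.integral_of_le zero_le_one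

lemma intervalIntegrable_zero_one_iff :
    IntervalIntegrable g volume 0 1 ↔ Integrable g unitVol :=
  intervalIntegrable_iff_integrableOn_Ioc_of_le zero_le_one

lemma ae_unitVol_mem_Icc : ∀ᵐ t ∂unitVol, t ∈ Set.Icc (0 : ℝ) 1 :=
  (ae_restrict_mem measurableSet_Ioc).mono fun _ ht => Set.Ioc_subset_Icc_self ht

lemma memLp_top_of_continuousOn (hg : ContinuousOn g (Set.Icc 0 1)) : MemLp g ⊤ unitVol := by
  obtain ⟨M, hM⟩ := isCompact_Icc.exists_bound_of_continuousOn hg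
  exact memLp_top_of_bound
    ((hg.mono Set.Ioc_subset_Icc_self).aestronglyMeasurable measurableSet_Ioc) M
    (ae_unitVol_mem_Icc.mono hM)

lemma MemLinf.memLp (hg : MemLinf g) : MemLp g ⊤ unitVol := by
  obtain ⟨M, hM⟩ := hg.2
  exact memLp_top_of_bound hg.1.aestronglyMeasurable M (restrict_Ioo_eq_unitVol ▸ hM)

lemma Linf_nonneg (g : ℝ → ℝ) : 0 ≤ Linf g := by
  rw [Linf, restrict_Ioo_eq_unitVol, essSup_eq_sInf]
  refine Real.sInf_nonneg fun M (hM : unitVol {t | M < |g t|} = 0) => ?_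
  have hae : ∀ᵐ t ∂unitVol, |g t| ≤ M := ae_iff.2 (by simpa only [not_le] using hM)
  obtain ⟨t, ht⟩ := hae.exists
  exact (abs_nonneg _).trans ht

lemma ae_abs_le_Linf (hg : MemLp g ⊤ unitVol) : ∀ᵐ t ∂unitVol, |g t| ≤ Linf g := by
  have hLinf : Linf g = lpNorm g ⊤ unitVol := by
    rw [lpNorm_exponent_top_eq_essSup hg, Linf, restrict_Ioo_eq_unitVol]
    rfl
  exact hLinf ▸ ae_le_lpNorm_exponent_top hg

lemma Linf_pos (hg : MemLp g ⊤ unitVol) (hne : ¬ ∀ᵐ t ∂unitVol, g t = 0) : 0 < Linf g := by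
  refine (Linf_nonneg g).lt_of_ne' fun hzero => hne ?_
  filter_upwards [ae_abs_le_Linf hg] with t ht
  exact abs_nonpos_iff.1 (hzero ▸ ht)

end UnitInterval

namespace HasL1Deriv

variable {f f' g g' : ℝ → ℝ} {s t p q : ℝ}

lemma intervalIntegrable (hg : HasL1Deriv g g') (hs : s ∈ Set.Icc (0 : ℝ) 1)
    (ht : t ∈ Set.Icc (0 : ℝ) 1) : IntervalIntegrable g' volume s t := by
  rw [← Set.uIcc_of_le zero_le_one] at hs ht
  exact hg.2.1.mono_set (Set.uIcc_subset_uIcc hs ht)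

lemma sub_eq_integral (hg : HasL1Deriv g g') (hs : s ∈ Set.Icc (0 : ℝ) 1)
    (ht : t ∈ Set.Icc (0 : ℝ) 1) : g t - g s = ∫ x in s..t, g' x := by
  have h0 : (0 : ℝ) ∈ Set.Icc (0 : ℝ) 1 := Set.left_mem_Icc.2 zero_le_one
  rw [hg.2.2 t ht, hg.2.2 s hs, add_sub_add_left_eq_sub,
    intervalIntegral.integral_interval_sub_left (hg.intervalIntegrable h0 ht)
      (hg.intervalIntegrable h0 hs)]

lemma sub (hf : HasL1Deriv f f') (hg : HasL1Deriv g g') : HasL1Deriv (f - g) (f' - g') := by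
  refine ⟨hf.1.sub hg.1, hf.2.1.sub hg.2.1, fun x hx => ?_⟩
  have h0 : (0 : ℝ) ∈ Set.Icc (0 : ℝ) 1 := Set.left_mem_Icc.2 zero_le_one
  simp only [Pi.sub_apply]
  rw [intervalIntegral.integral_sub (hf.intervalIntegrable h0 hx) (hg.intervalIntegrable h0 hx),
    hf.2.2 x hx, hg.2.2 x hx]
  ring

lemma continuousOn (hg : HasL1Deriv g g') : ContinuousOn g (Set.Icc 0 1) := by
  have hprim := intervalIntegral.continuousOn_primitive_interval' hg.2.1 Set.left_mem_uIcc
  rw [Set.uIcc_of_le zero_le_one] at hprim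
  exact (continuousOn_const.add hprim).congr hg.2.2

lemma memLp_top (hg : HasL1Deriv g g') : MemLp g ⊤ unitVol :=
  memLp_top_of_continuousOn hg.continuousOn

lemma memLp (hg : HasL1Deriv g g') (p : ENNReal) : MemLp g p unitVol :=
  hg.memLp_top.mono_exponent le_top

lemma abs_sub_le (hg : HasL1Deriv g g') (hp : 0 ≤ p) (hq : q ≤ 1) (hs : s ∈ Set.Icc p q)
    (ht : t ∈ Set.Icc p q) : |g t - g s| ≤ ∫ x in p..q, |g' x| := by
  have hpq : p ≤ q := hs.1.trans hs.2
  have hsub : Set.Icc p q ⊆ Set.Icc 0 1 := Set.Icc_subset_Icc hp hq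
  have hint : IntervalIntegrable g' volume p q :=
    hg.intervalIntegrable (hsub (Set.left_mem_Icc.2 hpq)) (hsub (Set.right_mem_Icc.2 hpq))
  rw [hg.sub_eq_integral (hsub hs) (hsub ht), intervalIntegral.integral_of_le hpq]
  refine (intervalIntegral.norm_integral_le_integral_norm_uIoc (f := g')).trans ?_
  exact setIntegral_mono_set hint.abs.1 (ae_of_all _ fun _ => abs_nonneg _)
    (Set.Ioc_subset_Ioc (le_min hs.1 ht.1) (max_le hs.2 ht.2)).eventuallyLE

lemma absolutelyContinuousOnInterval (hg : HasL1Deriv g g') :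
    AbsolutelyContinuousOnInterval g 0 1 := by
  have hprim : AbsolutelyContinuousOnInterval (fun x => ∫ t in (0 : ℝ)..x, g' t) 0 1 :=
    hg.2.1.absolutelyContinuousOnInterval_intervalIntegral Set.left_mem_uIcc
  refine hprim.congr' (Filter.eventually_inf_principal.2 (Filter.Eventually.of_forall
    fun E hE => Finset.sum_congr rfl fun i hi => ?_))
  have hmem := hE.1 i hi
  rw [Set.uIcc_of_le zero_le_one] at hmem
  rw [hg.2.2 _ hmem.1, hg.2.2 _ hmem.2, dist_add_left]

lemma ae_hasDerivAt (hg : HasL1Deriv g g') : ∀ᵐ t ∂unitVol, HasDerivAt g (g' t) t := by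
  rw [← restrict_Ioo_eq_unitVol, ae_restrict_iff' measurableSet_Ioo]
  filter_upwards [hg.2.1.ae_hasDerivAt_integral] with t hderiv ht
  have hIcc : t ∈ Set.uIcc (0 : ℝ) 1 := by
    rw [Set.uIcc_of_le zero_le_one]
    exact Set.Ioo_subset_Icc_self ht
  refine ((hderiv hIcc 0 Set.left_mem_uIcc).const_add (g 0)).congr_of_eventuallyEq ?_
  filter_upwards [Ioo_mem_nhds ht.1 ht.2] with x hx using hg.2.2 x (Set.Ioo_subset_Icc_self hx)

lemma integral_deriv_mul_sq (hf : HasL1Deriv f f') (hg : HasL1Deriv g g') :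
    ∫ t, (f' t * g t ^ 2 + 2 * (f t * g' t * g t)) ∂unitVol = f 1 * g 1 ^ 2 - f 0 * g 0 ^ 2 := by
  have hac := (hf.absolutelyContinuousOnInterval.mul hg.absolutelyContinuousOnInterval).mul
    hg.absolutelyContinuousOnInterval
  have hftc := hac.integral_deriv_eq_sub
  rw [integral_zero_one_eq_integral_unitVol] at hftc
  calc ∫ t, (f' t * g t ^ 2 + 2 * (f t * g' t * g t)) ∂unitVol
      = ∫ t, deriv (f * g * g) t ∂unitVol := by
        refine integral_congr_ae ?_
        filter_upwards [hf.ae_hasDerivAt, hg.ae_hasDerivAt] with t hft hgt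
        rw [((hft.mul hgt).mul hgt).deriv, Pi.mul_apply]
        ring
    _ = f 1 * g 1 ^ 2 - f 0 * g 0 ^ 2 := by
        rw [hftc]
        simp only [Pi.mul_apply]
        ring

end HasL1Deriv

namespace H1

variable (u v : H1)

lemma hasL1Deriv : HasL1Deriv u.val u.dval := ⟨u.dval_meas, u.dval_int, u.ftc⟩

lemma memLp_val (p : ENNReal) : MemLp u.val p unitVol := u.hasL1Deriv.memLp p

lemma memLp_dval : MemLp u.dval 2 unitVol :=
  (memLp_two_iff_integrable_sq u.dval_meas.aestronglyMeasurable).2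
    (intervalIntegrable_zero_one_iff.1 u.dval_sq_int)

instance : Sub H1 where
  sub u v :=
    { val := u.val - v.val
      dval := u.dval - v.dval
      dval_meas := u.dval_meas.sub v.dval_meas
      dval_int := u.dval_int.sub v.dval_int
      dval_sq_int :=
        intervalIntegrable_zero_one_iff.2 (u.memLp_dval.sub v.memLp_dval).integrable_sq
      ftc := (u.hasL1Deriv.sub v.hasL1Deriv).2.2 }

@[simp] lemma sub_val : (u - v).val = u.val - v.val := rfl

@[simp] lemma sub_dval : (u - v).dval = u.dval - v.dval := rfl

variable {u v}

lemma IsH2.exists_hasL1Deriv (hu : u.IsH2) :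
    ∃ u'', HasL1Deriv u.dval u'' ∧ MemLp u'' 2 unitVol := by
  obtain ⟨u'', hmeas, hint, hsq, hftc⟩ := hu
  exact ⟨u'', ⟨hmeas, hint, hftc⟩, (memLp_two_iff_integrable_sq hmeas.aestronglyMeasurable).2
    (intervalIntegrable_zero_one_iff.1 hsq)⟩

lemma abs_val_le (h0 : v.val 0 = 0) {x : ℝ} (hx : x ∈ Set.Icc (0 : ℝ) 1) :
    |v.val x| ≤ lpNorm v.dval 2 unitVol := by
  calc |v.val x| = |v.val x - v.val 0| := by rw [h0, sub_zero]
    _ ≤ ∫ t in (0 : ℝ)..1, |v.dval t| :=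
        v.hasL1Deriv.abs_sub_le le_rfl le_rfl (Set.left_mem_Icc.2 zero_le_one) hx
    _ = ∫ t, |v.dval t| ∂unitVol := integral_zero_one_eq_integral_unitVol _
    _ ≤ lpNorm v.dval 2 unitVol := integral_abs_le_lpNorm one_le_two v.memLp_dval

lemma lpNorm_val_le (h0 : v.val 0 = 0) :
    lpNorm v.val 2 unitVol ≤ lpNorm v.dval 2 unitVol :=
  lpNorm_le_of_ae_bound lpNorm_nonneg (ae_unitVol_mem_Icc.mono fun _ ht => abs_val_le h0 ht)

end H1

namespace Coeffs

variable (P : Coeffs)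

lemma hasL1Deriv_a : HasL1Deriv P.a P.a' := ⟨P.a'_meas, P.a'_int, P.ftc_a⟩

lemma hasL1Deriv_b : HasL1Deriv P.b P.b' := ⟨P.b'_meas, P.b'_int, P.ftc_b⟩

lemma memLp_a : MemLp P.a ⊤ unitVol := P.hasL1Deriv_a.memLp_top

lemma memLp_b : MemLp P.b ⊤ unitVol := P.hasL1Deriv_b.memLp_top

lemma memLp_c : MemLp P.c ⊤ unitVol := MemLinf.memLp ⟨P.c_meas, P.c_bdd⟩

lemma memLp_a' : MemLp P.a' ⊤ unitVol := MemLinf.memLp ⟨P.a'_meas, P.a'_bdd⟩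

lemma memLp_b' : MemLp P.b' ⊤ unitVol := MemLinf.memLp ⟨P.b'_meas, P.b'_bdd⟩

/-- A common bound for the `L^∞` norms of `a`, `b`, `c` and `a'`, from which the constants of the
error estimates are built. -/
def bound : ℝ := max (max (Linf P.a) (Linf P.b)) (max (Linf P.c) (Linf P.a'))

lemma bound_nonneg : 0 ≤ P.bound :=
  (Linf_nonneg P.a).trans ((le_max_left _ _).trans (le_max_left _ _))

lemma ae_abs_a_le_bound : ∀ᵐ t ∂unitVol, |P.a t| ≤ P.bound :=
  (ae_abs_le_Linf P.memLp_a).mono fun _ h => h.trans ((le_max_left _ _).trans (le_max_left _ _))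

lemma ae_abs_b_le_bound : ∀ᵐ t ∂unitVol, |P.b t| ≤ P.bound :=
  (ae_abs_le_Linf P.memLp_b).mono fun _ h => h.trans ((le_max_right _ _).trans (le_max_left _ _))

lemma ae_abs_c_le_bound : ∀ᵐ t ∂unitVol, |P.c t| ≤ P.bound :=
  (ae_abs_le_Linf P.memLp_c).mono fun _ h => h.trans ((le_max_left _ _).trans (le_max_right _ _))

lemma ae_abs_a'_le_bound : ∀ᵐ t ∂unitVol, |P.a' t| ≤ P.bound :=
  (ae_abs_le_Linf P.memLp_a').mono fun _ h => h.trans ((le_max_right _ _).trans (le_max_right _ _))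

section BilinearForm

variable (u v w : H1)

lemma integrable_a_mul : Integrable (fun t => P.a t * u.dval t * v.dval t) unitVol :=
  (u.memLp_dval.mul P.memLp_a : MemLp (P.a * u.dval) 2 unitVol).integrable_mul v.memLp_dval

lemma integrable_b_mul : Integrable (fun t => P.b t * u.dval t * v.val t) unitVol :=
  (u.memLp_dval.mul P.memLp_b : MemLp (P.b * u.dval) 2 unitVol).integrable_mul (v.memLp_val 2)

lemma integrable_c_mul : Integrable (fun t => P.c t * u.val t * v.val t) unitVol :=
  ((u.memLp_val 2).mul P.memLp_c : MemLp (P.c * u.val) 2 unitVol).integrable_mul (v.memLp_val 2)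

lemma B_eq_add : P.B u v = ∫ t, P.a t * u.dval t * v.dval t ∂unitVol
    + ∫ t, P.b t * u.dval t * v.val t ∂unitVol + ∫ t, P.c t * u.val t * v.val t ∂unitVol := by
  have hab : Integrable (fun t => P.a t * u.dval t * v.dval t + P.b t * u.dval t * v.val t)
      unitVol := (P.integrable_a_mul u v).add (P.integrable_b_mul u v)
  rw [B, integral_zero_one_eq_integral_unitVol, integral_add hab (P.integrable_c_mul u v),
    integral_add (P.integrable_a_mul u v) (P.integrable_b_mul u v)]

lemma B_sub_left : P.B (u - v) w = P.B u w - P.B v w := by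
  simp only [B_eq_add, H1.sub_val, H1.sub_dval, Pi.sub_apply, mul_sub, sub_mul]
  rw [integral_sub (P.integrable_a_mul u w) (P.integrable_a_mul v w),
    integral_sub (P.integrable_b_mul u w) (P.integrable_b_mul v w),
    integral_sub (P.integrable_c_mul u w) (P.integrable_c_mul v w)]
  ring

lemma B_sub_right : P.B u (v - w) = P.B u v - P.B u w := by
  simp only [B_eq_add, H1.sub_val, H1.sub_dval, Pi.sub_apply, mul_sub]
  rw [integral_sub (P.integrable_a_mul u v) (P.integrable_a_mul u w),
    integral_sub (P.integrable_b_mul u v) (P.integrable_b_mul u w),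
    integral_sub (P.integrable_c_mul u v) (P.integrable_c_mul u w)]
  ring

variable {u v}

lemma abs_B_le (hu : u.val 0 = 0) (hv : v.val 0 = 0) :
    |P.B u v| ≤ 3 * P.bound * lpNorm u.dval 2 unitVol * lpNorm v.dval 2 unitVol := by
  have hM := P.bound_nonneg
  have ha := abs_integral_mul_mul_le P.memLp_a P.ae_abs_a_le_bound hM u.memLp_dval v.memLp_dval
  have hb := abs_integral_mul_mul_le P.memLp_b P.ae_abs_b_le_bound hM u.memLp_dval (v.memLp_val 2)
  have hc := abs_integral_mul_mul_le P.memLp_c P.ae_abs_c_le_bound hM (u.memLp_val 2)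
    (v.memLp_val 2)
  have hMu : 0 ≤ P.bound * lpNorm u.dval 2 unitVol := mul_nonneg hM lpNorm_nonneg
  replace hb := hb.trans (mul_le_mul_of_nonneg_left (H1.lpNorm_val_le hv) hMu)
  replace hc := hc.trans (mul_le_mul (mul_le_mul_of_nonneg_left (H1.lpNorm_val_le hu) hM)
    (H1.lpNorm_val_le hv) lpNorm_nonneg hMu)
  rw [B_eq_add]
  refine (abs_add_three _ _ _).trans ?_
  linarith

variable (v) in
lemma integrable_energy : Integrable
    (fun t => P.a t * v.dval t ^ 2 + (P.c t - P.b' t / 2) * v.val t ^ 2) unitVol := by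
  have hb' : Integrable (fun t => P.b' t * v.val t * v.val t) unitVol :=
    ((v.memLp_val 2).mul P.memLp_b' : MemLp (P.b' * v.val) 2 unitVol).integrable_mul
      (v.memLp_val 2)
  refine (((P.integrable_a_mul v v).add (P.integrable_c_mul v v)).sub (hb'.div_const 2)).congr
    (ae_of_all _ fun t => ?_)
  simp only [Pi.add_apply, Pi.sub_apply]
  ring

lemma B_self (h0 : v.val 0 = 0) (h1 : v.val 1 = 0) : P.B v v = P.energySq v := by
  have hparts := P.hasL1Deriv_b.integral_deriv_mul_sq v.hasL1Deriv
  rw [h0, h1] at hparts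
  have hB : Integrable (fun t => P.a t * v.dval t * v.dval t + P.b t * v.dval t * v.val t
      + P.c t * v.val t * v.val t) unitVol :=
    ((P.integrable_a_mul v v).add (P.integrable_b_mul v v)).add (P.integrable_c_mul v v)
  rw [← sub_eq_zero, B, energySq, integral_zero_one_eq_integral_unitVol,
    integral_zero_one_eq_integral_unitVol, ← integral_sub hB (P.integrable_energy v)]
  calc ∫ t, ((P.a t * v.dval t * v.dval t + P.b t * v.dval t * v.val t + P.c t * v.val t * v.val t)
        - (P.a t * v.dval t ^ 2 + (P.c t - P.b' t / 2) * v.val t ^ 2)) ∂unitVol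
      = ∫ t, 1 / 2 * (P.b' t * v.val t ^ 2 + 2 * (P.b t * v.dval t * v.val t)) ∂unitVol :=
        integral_congr_ae (ae_of_all _ fun t => by ring)
    _ = 0 := by rw [integral_const_mul, hparts]; ring

variable (v) in
lemma a0_mul_sq_lpNorm_dval_le_energySq : P.a0 * lpNorm v.dval 2 unitVol ^ 2 ≤ P.energySq v := by
  rw [sq_lpNorm_two v.memLp_dval.1, ← integral_const_mul, energySq,
    integral_zero_one_eq_integral_unitVol]
  refine integral_mono_ae (v.memLp_dval.integrable_sq.const_mul _) (P.integrable_energy v) ?_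
  have hcb := P.cb_nonneg
  rw [restrict_Ioo_eq_unitVol] at hcb
  filter_upwards [hcb, ae_unitVol_mem_Icc] with t hcb_t ht
  exact le_add_of_le_of_nonneg (mul_le_mul_of_nonneg_right (P.a_lb t ht) (sq_nonneg _))
    (mul_nonneg hcb_t (sq_nonneg _))

end BilinearForm

section FiniteElement

variable {P} {f : ℝ → ℝ} {u uh w : H1} {N : ℕ} {m : Mesh N}

lemma B_sub_eq_zero (hu : P.IsWeakSolution f u) (huh : P.IsFESolution f m uh) (h0 : w.val 0 = 0)
    (h1 : w.val 1 = 0) (hw : m.IsPL w) : P.B (uh - u) w = 0 := by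
  rw [B_sub_left, hu.2.2 w h0 h1, huh.2.2.2 w h0 h1 hw, sub_self]

lemma cea (hu : P.IsWeakSolution f u) (huh : P.IsFESolution f m uh) (h0 : w.val 0 = 0)
    (h1 : w.val 1 = 0) (hw : m.IsPL w) :
    lpNorm (uh - u).dval 2 unitVol
      ≤ 3 * P.bound / P.a0 * lpNorm (w - u).dval 2 unitVol := by
  have he0 : (uh - u).val 0 = 0 := by simp [hu.1, huh.1]
  have he1 : (uh - u).val 1 = 0 := by simp [hu.2.1, huh.2.1]
  have hw0 : (w - u).val 0 = 0 := by simp [hu.1, h0]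
  have orthogonal : P.B (uh - u) (uh - u) = P.B (uh - u) (w - u) := by
    rw [B_sub_right, B_sub_right, B_sub_eq_zero hu huh huh.1 huh.2.1 huh.2.2.1,
      B_sub_eq_zero hu huh h0 h1 hw]
  have hsq : P.a0 * lpNorm (uh - u).dval 2 unitVol ^ 2
      ≤ 3 * P.bound * lpNorm (uh - u).dval 2 unitVol * lpNorm (w - u).dval 2 unitVol := by
    calc P.a0 * lpNorm (uh - u).dval 2 unitVol ^ 2
        ≤ P.energySq (uh - u) := P.a0_mul_sq_lpNorm_dval_le_energySq _
      _ = P.B (uh - u) (w - u) := by rw [← P.B_self he0 he1, orthogonal]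
      _ ≤ _ := (le_abs_self _).trans (P.abs_B_le he0 hw0)
  rw [div_mul_eq_mul_div, le_div_iff₀ P.a0_pos]
  rcases (lpNorm_nonneg : 0 ≤ lpNorm (uh - u).dval 2 unitVol).eq_or_lt with hzero | hpos
  · rw [← hzero, zero_mul]
    exact mul_nonneg (mul_nonneg zero_le_three P.bound_nonneg) lpNorm_nonneg
  · refine le_of_mul_le_mul_right ?_ hpos
    linarith

end FiniteElement

section Residual

variable {f : ℝ → ℝ} {p : ENNReal}

lemma memLp_res (hf : MemLp f p unitVol) {w : H1} (hw : MemLp w.dval p unitVol) :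
    MemLp (P.res f w) p unitVol :=
  ((hf.add (hw.mul P.memLp_a')).sub (hw.mul P.memLp_b)).sub ((w.memLp_val p).mul P.memLp_c)

lemma lpNorm_res_sub_res_le (f : ℝ → ℝ) {u w : H1} (h0 : (w - u).val 0 = 0) :
    lpNorm (P.res f w - P.res f u) 2 unitVol
      ≤ 3 * P.bound * lpNorm (w - u).dval 2 unitVol := by
  have hM := P.bound_nonneg
  have hd := (w - u).memLp_dval
  have hv := (w - u).memLp_val 2
  have hsplit : P.res f w - P.res f u
      = P.a' * (w - u).dval - P.b * (w - u).dval - P.c * (w - u).val := by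
    funext t
    simp only [res, H1.sub_val, H1.sub_dval, Pi.sub_apply, Pi.mul_apply]
    ring
  have ha' : MemLp (P.a' * (w - u).dval) 2 unitVol := hd.mul P.memLp_a'
  have hb : MemLp (P.b * (w - u).dval) 2 unitVol := hd.mul P.memLp_b
  rw [hsplit]
  linarith [lpNorm_sub_le (g := P.c * (w - u).val) (ha'.sub hb) one_le_two,
    lpNorm_sub_le (g := P.b * (w - u).dval) ha' one_le_two,
    lpNorm_mul_le_of_ae_bound P.ae_abs_a'_le_bound hM hd,
    lpNorm_mul_le_of_ae_bound P.ae_abs_b_le_bound hM hd,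
    lpNorm_mul_le_of_ae_bound P.ae_abs_c_le_bound hM hv,
    mul_le_mul_of_nonneg_left (H1.lpNorm_val_le h0) hM]

end Residual

end Coeffs

namespace Mesh

variable {N : ℕ} (m : Mesh N) {i : ℕ} {f g : ℝ → ℝ} {p : ENNReal}

lemma x_le {j : ℕ} (hij : i ≤ j) (hj : j ≤ N) : m.x i ≤ m.x j := by
  induction j, hij using Nat.le_induction with
  | base => exact le_rfl
  | succ k _ ih => exact (ih (by omega)).trans (m.x_mono k (by omega)).le

lemma x_nonneg (hi : i ≤ N) : 0 ≤ m.x i := by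
  simpa only [m.x_zero] using m.x_le (Nat.zero_le i) hi

lemma x_le_one (hi : i ≤ N) : m.x i ≤ 1 := by
  simpa only [m.x_last] using m.x_le hi le_rfl

lemma h_pos (hi : i < N) : 0 < m.h i := sub_pos.2 (m.x_mono i hi)

lemma sum_h : ∑ i ∈ Finset.range N, m.h i = 1 := by
  simp only [h, Finset.sum_range_sub, m.x_zero, m.x_last, sub_zero]

lemma Ioc_subset (hi : i < N) : Set.Ioc (m.x i) (m.x (i + 1)) ⊆ Set.Ioc 0 1 :=
  Set.Ioc_subset_Ioc (m.x_nonneg hi.le) (m.x_le_one hi)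

/-- The uniform probability measure on the `i`-th element: the element averages `⟨g⟩_i` are its
`L²` norms. -/
def elem (i : ℕ) : Measure ℝ := ProbabilityTheory.cond volume (Set.Ioc (m.x i) (m.x (i + 1)))

lemma elem_eq_smul (i : ℕ) :
    m.elem i = (ENNReal.ofReal (m.h i))⁻¹ • volume.restrict (Set.Ioc (m.x i) (m.x (i + 1))) := by
  rw [elem, ProbabilityTheory.cond, Real.volume_Ioc, h]

lemma isProbabilityMeasure_elem (hi : i < N) : IsProbabilityMeasure (m.elem i) :=
  ProbabilityTheory.cond_isProbabilityMeasure_of_finite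
    (by simpa using m.x_mono i hi) (by simp)

lemma ae_elem_mem_Ioc (i : ℕ) : ∀ᵐ t ∂m.elem i, t ∈ Set.Ioc (m.x i) (m.x (i + 1)) :=
  ProbabilityTheory.ae_cond_mem measurableSet_Ioc

lemma elem_absolutelyContinuous (hi : i < N) : m.elem i ≪ unitVol := by
  rw [elem_eq_smul]
  exact (Measure.restrict_mono (m.Ioc_subset hi) le_rfl).absolutelyContinuous.smul_left _

lemma memLp_elem (hi : i < N) (hg : MemLp g p unitVol) : MemLp g p (m.elem i) := by
  rw [elem_eq_smul]
  exact (hg.mono_measure (Measure.restrict_mono (m.Ioc_subset hi) le_rfl)).smul_measure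
    (by simpa using m.h_pos hi)

lemma h_mul_integral_elem (hi : i < N) (g : ℝ → ℝ) :
    m.h i * ∫ t, g t ∂m.elem i = ∫ t in (m.x i)..(m.x (i + 1)), g t := by
  rw [elem_eq_smul, integral_smul_measure, ENNReal.toReal_inv,
    ENNReal.toReal_ofReal (m.h_pos hi).le, smul_eq_mul, mul_inv_cancel_left₀ (m.h_pos hi).ne',
    intervalIntegral.integral_of_le (m.x_mono i hi).le]

lemma sum_h_mul_integral_elem (hg : Integrable g unitVol) :
    ∑ i ∈ Finset.range N, m.h i * ∫ t, g t ∂m.elem i = ∫ t, g t ∂unitVol := by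
  have hint : ∀ i < N, IntervalIntegrable g volume (m.x i) (m.x (i + 1)) := fun i hi =>
    (intervalIntegrable_iff_integrableOn_Ioc_of_le (m.x_mono i hi).le).2
      (IntegrableOn.mono_set hg (m.Ioc_subset hi))
  rw [Finset.sum_congr rfl fun i hi => m.h_mul_integral_elem (Finset.mem_range.1 hi) g,
    intervalIntegral.sum_integral_adjacent_intervals hint, m.x_zero, m.x_last,
    integral_zero_one_eq_integral_unitVol]

lemma avg_nonneg (g : ℝ → ℝ) (i : ℕ) : 0 ≤ m.avg g i := Real.sqrt_nonneg _

lemma avg_eq_lpNorm (hi : i < N) (hg : AEStronglyMeasurable g unitVol) :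
    m.avg g i = lpNorm g 2 (m.elem i) := by
  rw [lpNorm_two_eq_sqrt_integral_sq (hg.mono_ac (m.elem_absolutelyContinuous hi)), avg,
    ← m.h_mul_integral_elem hi, one_div, inv_mul_cancel_left₀ (m.h_pos hi).ne']

lemma avg_le_of_ae_bound (hi : i < N) (hg : AEStronglyMeasurable g unitVol) {L : ℝ} (hL : 0 ≤ L)
    (hbound : ∀ᵐ t ∂m.elem i, |g t| ≤ L) : m.avg g i ≤ L := by
  have := m.isProbabilityMeasure_elem hi
  rw [m.avg_eq_lpNorm hi hg]
  exact lpNorm_le_of_ae_bound hL hbound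

lemma avg_add_le (hi : i < N) (hf : MemLp f 2 unitVol) (hg : MemLp g 2 unitVol) :
    m.avg (f + g) i ≤ m.avg f i + m.avg g i := by
  rw [m.avg_eq_lpNorm hi (hf.add hg).1, m.avg_eq_lpNorm hi hf.1, m.avg_eq_lpNorm hi hg.1]
  exact lpNorm_add_le (m.memLp_elem hi hf) one_le_two

lemma sum_h_mul_sq_avg (hg : MemLp g 2 unitVol) :
    ∑ i ∈ Finset.range N, m.h i * m.avg g i ^ 2 = lpNorm g 2 unitVol ^ 2 := by
  rw [sq_lpNorm_two hg.1, ← m.sum_h_mul_integral_elem hg.integrable_sq]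
  refine Finset.sum_congr rfl fun i hi => ?_
  have hi := Finset.mem_range.1 hi
  rw [m.avg_eq_lpNorm hi hg.1, sq_lpNorm_two (m.memLp_elem hi hg).1]

lemma h_mul_sq_avg_le (hi : i < N) (hg : MemLp g 2 unitVol) :
    m.h i * m.avg g i ^ 2 ≤ lpNorm g 2 unitVol ^ 2 := by
  rw [← m.sum_h_mul_sq_avg hg]
  exact Finset.single_le_sum (f := fun j => m.h j * m.avg g j ^ 2)
    (fun j hj => mul_nonneg (m.h_pos (Finset.mem_range.1 hj)).le (sq_nonneg _))
    (Finset.mem_range.2 hi)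

lemma lpNorm_le_of_avg_le (hf : MemLp f 2 unitVol) (hg : MemLp g 2 unitVol) {C : ℝ} (hC : 0 ≤ C)
    (hfg : ∀ i < N, m.avg f i ≤ C * m.avg g i) :
    lpNorm f 2 unitVol ≤ C * lpNorm g 2 unitVol := by
  refine le_of_sq_le_sq ?_ (mul_nonneg hC lpNorm_nonneg)
  rw [mul_pow, ← m.sum_h_mul_sq_avg hf, ← m.sum_h_mul_sq_avg hg, Finset.mul_sum]
  refine Finset.sum_le_sum fun i hi => ?_
  have hi := Finset.mem_range.1 hi
  rw [mul_left_comm, ← mul_pow]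
  exact mul_le_mul_of_nonneg_left (pow_le_pow_left₀ (m.avg_nonneg f i) (hfg i hi) 2)
    (m.h_pos hi).le

section Interpolation

variable (s : ℕ → ℝ) (u : H1)

/-- The step function taking the value `s i` on the `i`-th element. -/
def step (t : ℝ) : ℝ :=
  ∑ i ∈ Finset.range N, (Set.Ioc (m.x i) (m.x (i + 1))).indicator (fun _ => s i) t

lemma step_eq (hi : i < N) {t : ℝ} (ht : t ∈ Set.Ioc (m.x i) (m.x (i + 1))) :
    m.step s t = s i := by
  rw [step, Finset.sum_eq_single_of_mem i (Finset.mem_range.2 hi)]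
  · exact Set.indicator_of_mem ht _
  · intro j hj hji
    have hj := Finset.mem_range.1 hj
    refine Set.indicator_of_notMem (fun htj => ?_) _
    rcases hji.lt_or_gt with hlt | hgt
    · exact (ht.1.trans_le htj.2).not_ge (m.x_le hlt hi.le)
    · exact (htj.1.trans_le ht.2).not_ge (m.x_le hgt hj.le)

lemma measurable_step : Measurable (m.step s) :=
  Finset.measurable_sum _ fun _ _ => measurable_const.indicator measurableSet_Ioc

lemma memLp_step : MemLp (m.step s) 2 unitVol :=
  memLp_finsetSum _ fun i _ => (memLp_const (s i)).indicator measurableSet_Ioc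

/-- The continuous piecewise linear interpolant of `u`, given through its derivative: on each
element the slope is the mean of `u'`. -/
def interp : H1 where
  val x := u.val 0 + ∫ t in (0 : ℝ)..x, m.step (fun i => ∫ t, u.dval t ∂m.elem i) t
  dval := m.step fun i => ∫ t, u.dval t ∂m.elem i
  dval_meas := m.measurable_step _
  dval_int := intervalIntegrable_zero_one_iff.2 ((m.memLp_step _).integrable one_le_two)
  dval_sq_int := intervalIntegrable_zero_one_iff.2 (m.memLp_step _).integrable_sq
  ftc x _ := by simp

lemma interp_dval (hi : i < N) {t : ℝ} (ht : t ∈ Set.Ioc (m.x i) (m.x (i + 1))) :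
    (m.interp u).dval t = ∫ t, u.dval t ∂m.elem i :=
  m.step_eq _ hi ht

lemma isPL_interp : m.IsPL (m.interp u) := fun _ hi =>
  ⟨_, fun _ ht => m.interp_dval u hi (Set.Ioo_subset_Ioc_self ht)⟩

lemma interp_val_zero : (m.interp u).val 0 = u.val 0 := by simp [interp]

lemma interp_val_one : (m.interp u).val 1 = u.val 1 := by
  have h1 : (1 : ℝ) ∈ Set.Icc (0 : ℝ) 1 := Set.right_mem_Icc.2 zero_le_one
  rw [u.ftc 1 h1, (m.interp u).ftc 1 h1, interp_val_zero, integral_zero_one_eq_integral_unitVol,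
    integral_zero_one_eq_integral_unitVol,
    ← m.sum_h_mul_integral_elem ((m.interp u).memLp_dval.integrable one_le_two),
    ← m.sum_h_mul_integral_elem (u.memLp_dval.integrable one_le_two)]
  refine congrArg (u.val 0 + ·) (Finset.sum_congr rfl fun i hi => ?_)
  have hi := Finset.mem_range.1 hi
  have := m.isProbabilityMeasure_elem hi
  rw [integral_congr_ae ((m.ae_elem_mem_Ioc i).mono fun t ht => m.interp_dval u hi ht),
    integral_const, probReal_univ, one_smul]

variable {u} {u'' : ℝ → ℝ}

lemma abs_dval_sub_dval_le (hu : HasL1Deriv u.dval u'') (hu2 : MemLp u'' 2 unitVol) (hi : i < N)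
    {s t : ℝ} (hs : s ∈ Set.Ioc (m.x i) (m.x (i + 1))) (ht : t ∈ Set.Ioc (m.x i) (m.x (i + 1))) :
    |u.dval t - u.dval s| ≤ m.h i * m.avg u'' i := by
  have := m.isProbabilityMeasure_elem hi
  calc |u.dval t - u.dval s|
      ≤ ∫ x in (m.x i)..(m.x (i + 1)), |u'' x| :=
        hu.abs_sub_le (m.x_nonneg hi.le) (m.x_le_one hi) (Set.Ioc_subset_Icc_self hs)
          (Set.Ioc_subset_Icc_self ht)
    _ = m.h i * ∫ x, |u'' x| ∂m.elem i := (m.h_mul_integral_elem hi _).symm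
    _ ≤ m.h i * m.avg u'' i := by
        rw [m.avg_eq_lpNorm hi hu2.1]
        exact mul_le_mul_of_nonneg_left
          (integral_abs_le_lpNorm one_le_two (m.memLp_elem hi hu2)) (m.h_pos hi).le

lemma avg_interp_sub_dval_le (hu : HasL1Deriv u.dval u'') (hu2 : MemLp u'' 2 unitVol)
    (hi : i < N) : m.avg (m.interp u - u).dval i ≤ m.h i * m.avg u'' i := by
  have := m.isProbabilityMeasure_elem hi
  refine m.avg_le_of_ae_bound hi (m.interp u - u).memLp_dval.1
    (mul_nonneg (m.h_pos hi).le (m.avg_nonneg _ _)) ?_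
  filter_upwards [m.ae_elem_mem_Ioc i] with t ht
  rw [H1.sub_dval, Pi.sub_apply, m.interp_dval u hi ht, abs_sub_comm]
  exact abs_sub_integral_le ((m.memLp_elem hi u.memLp_dval).integrable one_le_two)
    ((m.ae_elem_mem_Ioc i).mono fun s hs => m.abs_dval_sub_dval_le hu hu2 hi hs ht)

lemma lpNorm_interp_sub_dval_le (hu : HasL1Deriv u.dval u'') (hu2 : MemLp u'' 2 unitVol) {H : ℝ}
    (hH0 : 0 ≤ H) (hH : ∀ i < N, m.h i ≤ H) :
    lpNorm (m.interp u - u).dval 2 unitVol ≤ H * lpNorm u'' 2 unitVol :=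
  m.lpNorm_le_of_avg_le (m.interp u - u).memLp_dval hu2 hH0 fun i hi =>
    (m.avg_interp_sub_dval_le hu hu2 hi).trans
      (mul_le_mul_of_nonneg_right (hH i hi) (m.avg_nonneg _ _))

end Interpolation

end Mesh

lemma rpow_two_thirds_le_add {x y z : ℝ} (hx : 0 ≤ x) (hy : 0 ≤ y) (hz : 0 ≤ z)
    (hxyz : x ≤ y + z) : x ^ ((2 : ℝ) / 3) ≤ y ^ ((2 : ℝ) / 3) + z ^ ((2 : ℝ) / 3) :=
  (Real.rpow_le_rpow hx hxyz (by norm_num)).trans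
    (Real.rpow_add_le_add_rpow hy hz (by norm_num) (by norm_num))

lemma ofReal_two_thirds_le_two : ENNReal.ofReal ((2 : ℝ) / 3) ≤ 2 :=
  ENNReal.ofReal_le_of_le_toReal (by norm_num)

/-- The continuous counterpart `∫₀¹ |g|^{2/3}` of the cube root of the intensity parameter. -/
def intensity (g : ℝ → ℝ) : ℝ := ∫ t, |g t| ^ ((2 : ℝ) / 3) ∂unitVol

section Intensity

variable {f g : ℝ → ℝ}

lemma intensity_nonneg (g : ℝ → ℝ) : 0 ≤ intensity g :=
  integral_nonneg fun _ => Real.rpow_nonneg (abs_nonneg _) _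

lemma Lp23_nonneg (g : ℝ → ℝ) : 0 ≤ Lp23 g := by
  rw [Lp23, integral_zero_one_eq_integral_unitVol]
  exact Real.rpow_nonneg (intensity_nonneg g) _

lemma Lp23_rpow_two_thirds (g : ℝ → ℝ) : Lp23 g ^ ((2 : ℝ) / 3) = intensity g := by
  rw [Lp23, integral_zero_one_eq_integral_unitVol, ← intensity,
    ← Real.rpow_mul (intensity_nonneg g)]
  norm_num

lemma integrable_abs_rpow_two_thirds {μ : Measure ℝ} [IsProbabilityMeasure μ]
    (hg : MemLp g 2 μ) : Integrable (fun t => |g t| ^ ((2 : ℝ) / 3)) μ :=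
  integrable_abs_rpow (by norm_num) ofReal_two_thirds_le_two hg

lemma intensity_add_le (hf : MemLp f 2 unitVol) (hg : MemLp g 2 unitVol) :
    intensity (f + g) ≤ intensity f + intensity g := by
  have hfi := integrable_abs_rpow_two_thirds hf
  have hgi := integrable_abs_rpow_two_thirds hg
  rw [intensity, intensity, intensity, ← integral_add hfi hgi]
  exact integral_mono (integrable_abs_rpow_two_thirds (hf.add hg)) (hfi.add hgi) fun t =>
    rpow_two_thirds_le_add (abs_nonneg _) (abs_nonneg _) (abs_nonneg _) (abs_add_le _ _)

lemma intensity_le_lpNorm_rpow (hg : MemLp g 2 unitVol) :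
    intensity g ≤ lpNorm g 2 unitVol ^ ((2 : ℝ) / 3) :=
  integral_abs_rpow_le_lpNorm_rpow (by norm_num) ofReal_two_thirds_le_two hg

lemma intensity_pos (hg : MemLp g 2 unitVol) (hne : ¬ ∀ᵐ t ∂unitVol, g t = 0) :
    0 < intensity g := by
  refine (intensity_nonneg g).lt_of_ne' fun hzero => hne ?_
  have hae := (integral_eq_zero_iff_of_nonneg (fun t => Real.rpow_nonneg (abs_nonneg (g t)) _)
    (integrable_abs_rpow_two_thirds hg)).1 hzero
  filter_upwards [hae] with t ht
  exact abs_eq_zero.1 ((Real.rpow_eq_zero (abs_nonneg _) (by norm_num)).1 ht)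

end Intensity

namespace Mesh

variable {N : ℕ} (m : Mesh N) {i : ℕ} {f g : ℝ → ℝ}

/-- The cube root `∑ h_i ⟨g⟩_i^{2/3}` of the intensity parameter. -/
def alphaRoot (g : ℝ → ℝ) : ℝ := ∑ i ∈ Finset.range N, m.h i * m.avg g i ^ ((2 : ℝ) / 3)

lemma alphaRoot_nonneg (g : ℝ → ℝ) : 0 ≤ m.alphaRoot g :=
  Finset.sum_nonneg fun i hi =>
    mul_nonneg (m.h_pos (Finset.mem_range.1 hi)).le (Real.rpow_nonneg (m.avg_nonneg g i) _)

lemma alpha_rpow_one_third (g : ℝ → ℝ) : m.alpha g ^ ((1 : ℝ) / 3) = m.alphaRoot g := by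
  rw [alpha, ← alphaRoot, ← Real.rpow_natCast, ← Real.rpow_mul (m.alphaRoot_nonneg g)]
  norm_num

lemma alphaRoot_add_le (hf : MemLp f 2 unitVol) (hg : MemLp g 2 unitVol) :
    m.alphaRoot (f + g) ≤ m.alphaRoot f + m.alphaRoot g := by
  rw [alphaRoot, alphaRoot, alphaRoot, ← Finset.sum_add_distrib]
  refine Finset.sum_le_sum fun i hi => ?_
  have hi := Finset.mem_range.1 hi
  rw [← mul_add]
  exact mul_le_mul_of_nonneg_left (rpow_two_thirds_le_add (m.avg_nonneg _ _) (m.avg_nonneg _ _)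
    (m.avg_nonneg _ _) (m.avg_add_le hi hf hg)) (m.h_pos hi).le

lemma alphaRoot_le_of_avg_le {K : ℝ} (hK : ∀ i < N, m.avg g i ≤ K) :
    m.alphaRoot g ≤ K ^ ((2 : ℝ) / 3) := by
  calc m.alphaRoot g ≤ ∑ i ∈ Finset.range N, m.h i * K ^ ((2 : ℝ) / 3) := by
        refine Finset.sum_le_sum fun i hi => ?_
        have hi := Finset.mem_range.1 hi
        exact mul_le_mul_of_nonneg_left
          (Real.rpow_le_rpow (m.avg_nonneg g i) (hK i hi) (by norm_num)) (m.h_pos hi).le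
    _ = K ^ ((2 : ℝ) / 3) := by rw [← Finset.sum_mul, m.sum_h, one_mul]

lemma avg_sub_comm (f g : ℝ → ℝ) (i : ℕ) : m.avg (f - g) i = m.avg (g - f) i := by
  simp only [avg, Pi.sub_apply, sub_sq_comm]

lemma abs_alphaRoot_sub_alphaRoot_le (hf : MemLp f 2 unitVol) (hg : MemLp g 2 unitVol) {K : ℝ}
    (hK : ∀ i < N, m.avg (f - g) i ≤ K) :
    |m.alphaRoot f - m.alphaRoot g| ≤ K ^ ((2 : ℝ) / 3) := by
  have hfg := m.alphaRoot_add_le hg (hf.sub hg)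
  have hgf := m.alphaRoot_add_le hf (hg.sub hf)
  rw [add_sub_cancel] at hfg hgf
  have hKfg := m.alphaRoot_le_of_avg_le hK
  have hKgf := m.alphaRoot_le_of_avg_le fun i hi => (m.avg_sub_comm g f i).trans_le (hK i hi)
  rw [abs_sub_le_iff]
  constructor <;> linarith

lemma alphaRoot_le_lpNorm_rpow (hg : MemLp g 2 unitVol) :
    m.alphaRoot g ≤ lpNorm g 2 unitVol ^ ((2 : ℝ) / 3) := by
  have hpow : ∀ y : ℝ, 0 ≤ y → (y ^ ((2 : ℝ) / 3)) ^ (3 : ℝ) = y ^ 2 := fun y hy => by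
    rw [← Real.rpow_mul hy, ← Real.rpow_natCast]
    norm_num
  have hmean := Real.arith_mean_le_rpow_mean (Finset.range N) m.h
    (fun i => m.avg g i ^ ((2 : ℝ) / 3)) (fun i hi => (m.h_pos (Finset.mem_range.1 hi)).le)
    m.sum_h (fun i _ => Real.rpow_nonneg (m.avg_nonneg g i) _) (p := 3) (by norm_num)
  simp only [hpow _ (m.avg_nonneg g _), m.sum_h_mul_sq_avg hg] at hmean
  refine hmean.trans_eq ?_
  rw [← Real.rpow_natCast, ← Real.rpow_mul lpNorm_nonneg]
  norm_num

lemma intensity_le_alphaRoot (hg : MemLp g 2 unitVol) : intensity g ≤ m.alphaRoot g := by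
  rw [intensity, ← m.sum_h_mul_integral_elem (integrable_abs_rpow_two_thirds hg)]
  refine Finset.sum_le_sum fun i hi => ?_
  have hi := Finset.mem_range.1 hi
  have := m.isProbabilityMeasure_elem hi
  rw [m.avg_eq_lpNorm hi hg.1]
  exact mul_le_mul_of_nonneg_left (integral_abs_rpow_le_lpNorm_rpow (by norm_num)
    ofReal_two_thirds_le_two (m.memLp_elem hi hg)) (m.h_pos hi).le

lemma avg_rpow_le_of_oscillation (hi : i < N) (hg : MemLp g 2 unitVol) {ω : ℝ} (hω0 : 0 ≤ ω)
    (hω : ∀ s ∈ Set.Ioc (m.x i) (m.x (i + 1)), ∀ t ∈ Set.Ioc (m.x i) (m.x (i + 1)),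
      |g s - g t| ≤ ω) :
    m.avg g i ^ ((2 : ℝ) / 3) ≤ ∫ t, |g t| ^ ((2 : ℝ) / 3) ∂m.elem i + ω ^ ((2 : ℝ) / 3) := by
  have := m.isProbabilityMeasure_elem hi
  have hpointwise : ∀ᵐ t ∂m.elem i,
      m.avg g i ^ ((2 : ℝ) / 3) ≤ |g t| ^ ((2 : ℝ) / 3) + ω ^ ((2 : ℝ) / 3) := by
    filter_upwards [m.ae_elem_mem_Ioc i] with t ht
    refine rpow_two_thirds_le_add (m.avg_nonneg g i) (abs_nonneg _) hω0
      (m.avg_le_of_ae_bound hi hg.1 (add_nonneg (abs_nonneg _) hω0) ?_)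
    filter_upwards [m.ae_elem_mem_Ioc i] with s hs
    linarith [abs_sub_abs_le_abs_sub (g s) (g t), hω s hs t ht]
  have hint := integrable_abs_rpow_two_thirds (m.memLp_elem hi hg)
  have hle := integral_mono_ae (integrable_const _) (hint.add (integrable_const _)) hpointwise
  simpa only [integral_add' hint (integrable_const _), integral_const, probReal_univ, one_smul]
    using hle

lemma alphaRoot_le_of_oscillation (hg : MemLp g 2 unitVol) {ω : ℝ} (hω0 : 0 ≤ ω)
    (hω : ∀ i < N, ∀ s ∈ Set.Ioc (m.x i) (m.x (i + 1)), ∀ t ∈ Set.Ioc (m.x i) (m.x (i + 1)),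
      |g s - g t| ≤ ω) :
    m.alphaRoot g ≤ intensity g + ω ^ ((2 : ℝ) / 3) := by
  calc m.alphaRoot g
      ≤ ∑ i ∈ Finset.range N, m.h i *
          (∫ t, |g t| ^ ((2 : ℝ) / 3) ∂m.elem i + ω ^ ((2 : ℝ) / 3)) :=
        Finset.sum_le_sum fun i hi => mul_le_mul_of_nonneg_left
          (m.avg_rpow_le_of_oscillation (Finset.mem_range.1 hi) hg hω0
            (hω i (Finset.mem_range.1 hi))) (m.h_pos (Finset.mem_range.1 hi)).le
    _ = intensity g + ω ^ ((2 : ℝ) / 3) := by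
        simp only [mul_add, Finset.sum_add_distrib, ← Finset.sum_mul, m.sum_h, one_mul,
          m.sum_h_mul_integral_elem (integrable_abs_rpow_two_thirds hg), intensity]

lemma exists_alphaRoot_le_of_uniformContinuous (hg : MemLp g 2 unitVol)
    (hgc : UniformContinuous g) {ω : ℝ} (hω : 0 < ω) :
    ∃ δ > 0, ∀ (N : ℕ) (m : Mesh N), (∀ i < N, m.h i < δ) →
      m.alphaRoot g ≤ intensity g + ω ^ ((2 : ℝ) / 3) := by
  obtain ⟨δ, hδ, hosc⟩ := Metric.uniformContinuous_iff.1 hgc ω hω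
  refine ⟨δ, hδ, fun N m hm => m.alphaRoot_le_of_oscillation hg hω.le fun i hi s hs t ht => ?_⟩
  refine (hosc ((Real.dist_le_of_mem_Icc ?_ ?_).trans_lt (hm i hi))).le
  exacts [Set.Ioc_subset_Icc_self hs, Set.Ioc_subset_Icc_self ht]

lemma exists_alphaRoot_le (hg : MemLp g 2 unitVol) {ε : ℝ} (hε : 0 < ε) :
    ∃ δ > 0, ∀ (N : ℕ) (m : Mesh N), (∀ i < N, m.h i < δ) →
      m.alphaRoot g ≤ intensity g + ε := by
  set ω : ℝ := (ε / 3) ^ ((3 : ℝ) / 2) with hω_def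
  have hω : 0 < ω := by positivity
  have hωε : ω ^ ((2 : ℝ) / 3) = ε / 3 := by
    rw [hω_def, ← Real.rpow_mul (by positivity)]
    norm_num
  obtain ⟨k, hk_supp, hgk, hk_cont, hk⟩ := hg.exists_hasCompactSupport_eLpNorm_sub_le
    (by norm_num) (ε := ENNReal.ofReal ω) (by simpa using hω)
  have hdist : lpNorm (g - k) 2 unitVol ≤ ω := by
    rw [← toReal_eLpNorm (hg.sub hk).1]
    exact ENNReal.toReal_le_of_le_ofReal hω.le hgk
  have hroot : lpNorm (g - k) 2 unitVol ^ ((2 : ℝ) / 3) ≤ ε / 3 :=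
    (Real.rpow_le_rpow lpNorm_nonneg hdist (by norm_num)).trans_eq hωε
  obtain ⟨δ, hδ, hkδ⟩ := exists_alphaRoot_le_of_uniformContinuous hk
    (hk_supp.uniformContinuous_of_continuous hk_cont) hω
  refine ⟨δ, hδ, fun N m hm => ?_⟩
  have hg_alpha := m.alphaRoot_add_le hk (hg.sub hk)
  have hk_intensity := intensity_add_le hg (hk.sub hg)
  rw [add_sub_cancel] at hg_alpha hk_intensity
  have hkg := intensity_le_lpNorm_rpow (hk.sub hg)
  rw [lpNorm_sub_comm] at hkg
  linarith [hkδ N m hm, m.alphaRoot_le_lpNorm_rpow (hg.sub hk)]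

lemma one_le_rho (g : ℝ → ℝ) (i : ℕ) : 1 ≤ m.rho g i := by
  have halpha : 0 ≤ m.alpha g := pow_nonneg (m.alphaRoot_nonneg g) 3
  exact Real.one_le_rpow
    (le_add_of_nonneg_right (mul_nonneg (inv_nonneg.2 halpha) (sq_nonneg _))) (by norm_num)

lemma rho_le (g : ℝ → ℝ) (i : ℕ) :
    m.rho g i ≤ 1 + m.avg g i ^ ((2 : ℝ) / 3) / m.alphaRoot g := by
  have halpha : 0 ≤ m.alpha g := pow_nonneg (m.alphaRoot_nonneg g) 3
  have havg : (m.avg g i ^ 2) ^ ((1 : ℝ) / 3) = m.avg g i ^ ((2 : ℝ) / 3) := by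
    rw [← Real.rpow_natCast, ← Real.rpow_mul (m.avg_nonneg g i)]
    norm_num
  calc m.rho g i
      ≤ 1 ^ ((1 : ℝ) / 3) + ((m.alpha g)⁻¹ * m.avg g i ^ 2) ^ ((1 : ℝ) / 3) :=
        Real.rpow_add_le_add_rpow zero_le_one
          (mul_nonneg (inv_nonneg.2 halpha) (sq_nonneg _)) (by norm_num) (by norm_num)
    _ = 1 + m.avg g i ^ ((2 : ℝ) / 3) / m.alphaRoot g := by
        rw [Real.one_rpow, Real.mul_rpow (inv_nonneg.2 halpha) (sq_nonneg _),
          Real.inv_rpow halpha, alpha_rpow_one_third, havg, div_eq_inv_mul (m.avg g i ^ _)]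

lemma rho_le_of_avg_le {L I : ℝ} (hL : 0 ≤ L) (hI : 0 < I)
    (havg : m.avg g i ≤ 2 * L) (halpha : 1 / 2 * I ≤ m.alphaRoot g) :
    m.rho g i ≤ 1 + 4 * (L ^ ((2 : ℝ) / 3) / I) := by
  have hpow : m.avg g i ^ ((2 : ℝ) / 3) ≤ L ^ ((2 : ℝ) / 3) + L ^ ((2 : ℝ) / 3) :=
    rpow_two_thirds_le_add (m.avg_nonneg g i) hL hL (by linarith)
  calc m.rho g i ≤ 1 + m.avg g i ^ ((2 : ℝ) / 3) / m.alphaRoot g := m.rho_le g i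
    _ ≤ 1 + (L ^ ((2 : ℝ) / 3) + L ^ ((2 : ℝ) / 3)) / (1 / 2 * I) := by gcongr
    _ = 1 + 4 * (L ^ ((2 : ℝ) / 3) / I) := by ring

lemma one_le_sigma (g : ℝ → ℝ) : 1 ≤ m.sigma g := by
  rw [← m.sum_h, sigma]
  exact Finset.sum_le_sum fun i hi =>
    le_mul_of_one_le_left (m.h_pos (Finset.mem_range.1 hi)).le (m.one_le_rho g i)

lemma sigma_le_two (g : ℝ → ℝ) : m.sigma g ≤ 2 := by
  calc m.sigma g
      ≤ ∑ i ∈ Finset.range N, (m.h i + m.h i * m.avg g i ^ ((2 : ℝ) / 3) / m.alphaRoot g) := by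
        refine Finset.sum_le_sum fun i hi => ?_
        refine (mul_le_mul_of_nonneg_right (m.rho_le g i)
          (m.h_pos (Finset.mem_range.1 hi)).le).trans_eq ?_
        ring
    _ = 1 + m.alphaRoot g / m.alphaRoot g := by
        rw [Finset.sum_add_distrib, m.sum_h, ← Finset.sum_div, ← alphaRoot]
    _ ≤ 2 := by linarith [div_self_le_one (m.alphaRoot g)]

end Mesh

namespace Coeffs

variable {P : Coeffs} {f : ℝ → ℝ} {u : H1}

lemma lpNorm_res_sub_le (hu : P.IsWeakSolution f u) {u'' : ℝ → ℝ} (hu' : HasL1Deriv u.dval u'')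
    (hu'' : MemLp u'' 2 unitVol) {N : ℕ} {m : Mesh N} {H : ℝ} (hH0 : 0 ≤ H)
    (hH : ∀ i < N, m.h i ≤ H) {uh : H1} (huh : P.IsFESolution f m uh) :
    lpNorm (P.res f uh - P.res f u) 2 unitVol
      ≤ 3 * P.bound * (3 * P.bound / P.a0 * (H * lpNorm u'' 2 unitVol)) := by
  have hbound := P.bound_nonneg
  have ha0 := P.a0_pos
  calc lpNorm (P.res f uh - P.res f u) 2 unitVol
      ≤ 3 * P.bound * lpNorm (uh - u).dval 2 unitVol :=
        P.lpNorm_res_sub_res_le f (by simp [hu.1, huh.1])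
    _ ≤ 3 * P.bound * (3 * P.bound / P.a0 * lpNorm (m.interp u - u).dval 2 unitVol) := by
        gcongr
        exact cea hu huh ((m.interp_val_zero u).trans hu.1) ((m.interp_val_one u).trans hu.2.1)
          (m.isPL_interp u)
    _ ≤ 3 * P.bound * (3 * P.bound / P.a0 * (H * lpNorm u'' 2 unitVol)) := by
        gcongr
        exact m.lpNorm_interp_sub_dval_le hu' hu'' hH0 hH

lemma exists_sq_avg_res_sub_le (hf : MemLp f 2 unitVol) (hu : P.IsWeakSolution f u)
    (hu2 : u.IsH2) {ρ : ℝ} (hρ : 0 < ρ) :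
    ∃ C : ℝ, ∀ (N : ℕ) (m : Mesh N), m.InS ρ → ∀ uh, P.IsFESolution f m uh →
      ∀ i < N, m.avg (P.res f uh - P.res f u) i ^ 2 ≤ C / N := by
  obtain ⟨u'', hu', hu''⟩ := hu2.exists_hasL1Deriv
  set A : ℝ := 3 * P.bound * (3 * P.bound / P.a0 * (2 * lpNorm u'' 2 unitVol))
  refine ⟨ρ * A ^ 2, fun N m hm uh huh i hi => ?_⟩
  have hN : (0 : ℝ) < N := Nat.cast_pos.2 (Nat.zero_lt_of_lt hi)
  have hres : MemLp (P.res f uh - P.res f u) 2 unitVol :=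
    (P.memLp_res hf uh.memLp_dval).sub (P.memLp_res hf u.memLp_dval)
  have hglobal : lpNorm (P.res f uh - P.res f u) 2 unitVol ≤ A / N :=
    (lpNorm_res_sub_le hu hu' hu'' (by positivity) (fun i hi => (hm i hi).2) huh).trans_eq
      (by ring)
  have hlocal : 1 / (ρ * N) * m.avg (P.res f uh - P.res f u) i ^ 2 ≤ (A / N) ^ 2 :=
    calc 1 / (ρ * N) * m.avg (P.res f uh - P.res f u) i ^ 2
        ≤ m.h i * m.avg (P.res f uh - P.res f u) i ^ 2 :=
          mul_le_mul_of_nonneg_right (hm i hi).1 (sq_nonneg _)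
      _ ≤ lpNorm (P.res f uh - P.res f u) 2 unitVol ^ 2 := m.h_mul_sq_avg_le hi hres
      _ ≤ (A / N) ^ 2 := pow_le_pow_left₀ lpNorm_nonneg hglobal 2
  calc m.avg (P.res f uh - P.res f u) i ^ 2
      = ρ * N * (1 / (ρ * N) * m.avg (P.res f uh - P.res f u) i ^ 2) := by field_simp
    _ ≤ ρ * N * (A / N) ^ 2 := mul_le_mul_of_nonneg_left hlocal (by positivity)
    _ = ρ * A ^ 2 / N := by field_simp

lemma eventually_avg_res_sub_le (hf : MemLp f 2 unitVol) (hu : P.IsWeakSolution f u)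
    (hu2 : u.IsH2) {ρ : ℝ} (hρ : 0 < ρ) {η : ℝ} (hη : 0 < η) :
    ∀ᶠ N : ℕ in Filter.atTop, ∀ m : Mesh N, m.InS ρ → ∀ uh, P.IsFESolution f m uh →
      ∀ i < N, m.avg (P.res f uh - P.res f u) i ≤ η := by
  obtain ⟨C, hC⟩ := exists_sq_avg_res_sub_le hf hu hu2 hρ
  filter_upwards [(tendsto_const_div_atTop_nhds_zero_nat C).eventually_lt_const
    (pow_pos hη 2)] with N hN m hm uh huh i hi
  exact le_of_sq_le_sq ((hC N m hm uh huh i hi).trans hN.le) hη.le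

lemma eventually_abs_alphaRoot_res_sub_intensity_le (hf : MemLp f 2 unitVol)
    (hu : P.IsWeakSolution f u) (hu2 : u.IsH2) {ρ : ℝ} (hρ : 0 < ρ) {ε : ℝ} (hε : 0 < ε) :
    ∀ᶠ N : ℕ in Filter.atTop, ∀ m : Mesh N, m.InS ρ → ∀ uh, P.IsFESolution f m uh →
      |m.alphaRoot (P.res f uh) - intensity (P.res f u)| ≤ ε := by
  have hr : MemLp (P.res f u) 2 unitVol := P.memLp_res hf u.memLp_dval
  obtain ⟨δ, hδ, hfine⟩ := Mesh.exists_alphaRoot_le hr (half_pos hε)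
  have hη : ((ε / 2) ^ ((3 : ℝ) / 2)) ^ ((2 : ℝ) / 3) = ε / 2 := by
    rw [← Real.rpow_mul (half_pos hε).le]
    norm_num
  filter_upwards [eventually_avg_res_sub_le hf hu hu2 hρ
      (Real.rpow_pos_of_pos (half_pos hε) ((3 : ℝ) / 2)),
    (tendsto_const_div_atTop_nhds_zero_nat (2 : ℝ)).eventually_lt_const hδ]
    with N havg hN m hm uh huh
  have hdiscrete := m.abs_alphaRoot_sub_alphaRoot_le (P.memLp_res hf uh.memLp_dval) hr
    (havg m hm uh huh)
  rw [hη, abs_le] at hdiscrete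
  rw [abs_le]
  constructor <;>
    linarith [hfine N m fun i hi => (hm i hi).2.trans_lt hN, m.intensity_le_alphaRoot hr]

lemma eventually_avg_res_le (hf : MemLp f ⊤ unitVol) (hu : P.IsWeakSolution f u) (hu2 : u.IsH2)
    {ρ : ℝ} (hρ : 0 < ρ) (hL : 0 < Linf (P.res f u)) :
    ∀ᶠ N : ℕ in Filter.atTop, ∀ m : Mesh N, m.InS ρ → ∀ uh, P.IsFESolution f m uh →
      ∀ i < N, m.avg (P.res f uh) i ≤ 2 * Linf (P.res f u) := by
  have hf2 : MemLp f 2 unitVol := hf.mono_exponent le_top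
  obtain ⟨u'', hu', -⟩ := hu2.exists_hasL1Deriv
  have hr : MemLp (P.res f u) ⊤ unitVol := P.memLp_res hf hu'.memLp_top
  have hr2 : MemLp (P.res f u) 2 unitVol := hr.mono_exponent le_top
  filter_upwards [eventually_avg_res_sub_le hf2 hu hu2 hρ hL] with N havg m hm uh huh i hi
  have hsum := m.avg_add_le hi hr2 ((P.memLp_res hf2 uh.memLp_dval).sub hr2)
  rw [add_sub_cancel] at hsum
  linarith [havg m hm uh huh i hi, m.avg_le_of_ae_bound hi hr.1 hL.le
    ((m.elem_absolutelyContinuous hi).ae_le (ae_abs_le_Linf hr))]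

end Coeffs

theorem statement17_general (P : Coeffs) {f : ℝ → ℝ} (hf : MemLinf f) {u : H1}
    (hu : P.IsWeakSolution f u) (hu2 : u.IsH2)
    (hne : ¬ ∀ᵐ x ∂(volume.restrict (Set.Ioo (0 : ℝ) 1)), P.res f u x = 0) {ρ : ℝ} (hρ : 0 < ρ) :
    ∀ᶠ N : ℕ in Filter.atTop, ∀ m : Mesh N, m.InS ρ → ∀ uh, P.IsFESolution f m uh →
      1 / 2 * Lp23 (P.res f u) ^ ((2 : ℝ) / 3) ≤ m.alpha (P.res f uh) ^ ((1 : ℝ) / 3) ∧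
      m.alpha (P.res f uh) ^ ((1 : ℝ) / 3) ≤ 3 / 2 * Lp23 (P.res f u) ^ ((2 : ℝ) / 3) ∧
      (∀ i < N, 1 ≤ m.rho (P.res f uh) i ∧ m.rho (P.res f uh) i
        ≤ 1 + 4 * (Linf (P.res f u) / Lp23 (P.res f u)) ^ ((2 : ℝ) / 3)) ∧
      1 ≤ m.sigma (P.res f uh) ∧ m.sigma (P.res f uh) ≤ 2 := by
  have hf2 : MemLp f 2 unitVol := hf.memLp.mono_exponent le_top
  rw [restrict_Ioo_eq_unitVol] at hne
  have hI : 0 < intensity (P.res f u) := intensity_pos (P.memLp_res hf2 u.memLp_dval) hne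
  have hL : 0 < Linf (P.res f u) := by
    obtain ⟨u'', hu', -⟩ := hu2.exists_hasL1Deriv
    exact Linf_pos (P.memLp_res hf.memLp hu'.memLp_top) hne
  rw [Real.div_rpow hL.le (Lp23_nonneg _), Lp23_rpow_two_thirds]
  filter_upwards [Coeffs.eventually_avg_res_le hf.memLp hu hu2 hρ hL,
    Coeffs.eventually_abs_alphaRoot_res_sub_intensity_le hf2 hu hu2 hρ (half_pos hI)]
    with N havg hclose m hm uh huh
  have halpha := abs_le.1 (hclose m hm uh huh)
  have hlower : 1 / 2 * intensity (P.res f u) ≤ m.alphaRoot (P.res f uh) := by linarith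
  rw [Mesh.alpha_rpow_one_third]
  exact ⟨hlower, by linarith, fun i hi => ⟨m.one_le_rho _ i,
    m.rho_le_of_avg_le hL.le hI (havg m hm uh huh i hi) hlower⟩, m.one_le_sigma _, m.sigma_le_two _⟩

/-- bounds on α_h, ρ and σ_h on meshes in S_N with
ρ₀ = (1 + γ (‖r‖_∞/‖r‖_{2/3})^{2/3})² (Lemma 6.0). -/
theorem statement17 (P : Coeffs) :
    ∃ γ : ℝ, 0 < γ ∧
      ∀ f : ℝ → ℝ, MemLinf f → MemL2 f →
      ∀ u : H1, P.IsWeakSolution f u → u.IsH2 →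
      ¬ (∀ᵐ x ∂(volume.restrict (Set.Ioo (0:ℝ) 1)), P.res f u x = 0) →
      ∃ N₀ : ℕ, ∀ N : ℕ, N₀ ≤ N →
        ∀ m : Mesh N,
          m.InS ((1 + γ * (Linf (P.res f u) / Lp23 (P.res f u)) ^ ((2:ℝ)/3))^2) →
          ∀ uh : H1, P.IsFESolution f m uh →
            (1/2) * (Lp23 (P.res f u)) ^ ((2:ℝ)/3)
                ≤ (m.alpha (P.res f uh)) ^ ((1:ℝ)/3) ∧
            (m.alpha (P.res f uh)) ^ ((1:ℝ)/3)
                ≤ (3/2) * (Lp23 (P.res f u)) ^ ((2:ℝ)/3) ∧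
            (∀ i < N, 1 ≤ m.rho (P.res f uh) i ∧
              m.rho (P.res f uh) i
                ≤ (1 + γ * (Linf (P.res f u) / Lp23 (P.res f u)) ^ ((2:ℝ)/3))^2) ∧
            1 ≤ m.sigma (P.res f uh) ∧ m.sigma (P.res f uh) ≤ 2 := by
  refine ⟨4, by norm_num, fun f hf _ u hu hu2 hne => ?_⟩
  have hq : 0 ≤ 4 * (Linf (P.res f u) / Lp23 (P.res f u)) ^ ((2 : ℝ) / 3) :=
    mul_nonneg zero_le_four (Real.rpow_nonneg (div_nonneg (Linf_nonneg _) (Lp23_nonneg _)) _)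
  obtain ⟨N₀, hN₀⟩ := Filter.eventually_atTop.1
    (statement17_general P hf hu hu2 hne (pow_pos (add_pos_of_pos_of_nonneg one_pos hq) 2))
  refine ⟨N₀, fun N hN m hm uh huh => ?_⟩
  obtain ⟨hlower, hupper, hrho, hsigma⟩ := hN₀ N hN m hm uh huh
  exact ⟨hlower, hupper, fun i hi => ⟨(hrho i hi).1,
    (hrho i hi).2.trans (le_self_pow₀ (le_add_of_nonneg_right hq) two_ne_zero)⟩, hsigma⟩

end EquidMesh
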